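/- Let δ : 𝕃 → ℚ be the group homomorphism with δ(x⃗_i) = 1/p_i and δ(c⃗) = 1. If δ(ω⃗) ≠ 0 (i.e. 𝕃 is not Calabi-Yau), then the quotient group 𝕃/ℤω⃗ is finite and its cardinality equals the absolute value of (p_1 p_2 ⋯ p_n)·δ(ω⃗), that is, the absolute value of (n − d − 1)·p_1⋯p_n − Σ_{i=1}^n Π_{j ≠ i} p_j. -/

import Mathlib

/-- The subgroup of relations `p i • x⃗_i − c⃗` inside the free abelian group
`(Fin n → ℤ) × ℤ` on the generators `x⃗_1, …, x⃗_n, c⃗`. -/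
def GLrels (n : ℕ) (p : Fin n → ℕ) : AddSubgroup ((Fin n → ℤ) × ℤ) :=
  AddSubgroup.closure (Set.range fun i : Fin n => ((Pi.single i (p i : ℤ), -1) : (Fin n → ℤ) × ℤ))

/-- The grading group `𝕃 = ⟨x⃗_1, …, x⃗_n, c⃗⟩ / ⟨p_i x⃗_i − c⃗⟩`. -/
abbrev GLgroup (n : ℕ) (p : Fin n → ℕ) : Type :=
  ((Fin n → ℤ) × ℤ) ⧸ GLrels n p

/-- The generator `x⃗_i` of `𝕃`. -/
def GLx (n : ℕ) (p : Fin n → ℕ) (i : Fin n) : GLgroup n p :=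
  QuotientAddGroup.mk (Pi.single i 1, 0)

/-- The generator `c⃗` of `𝕃`. -/
def GLc (n : ℕ) (p : Fin n → ℕ) : GLgroup n p :=
  QuotientAddGroup.mk (0, 1)

/-- The positive cone `𝕃_+`: the submonoid of `𝕃` generated by `x⃗_1, …, x⃗_n` and `c⃗`. -/
def GLplus (n : ℕ) (p : Fin n → ℕ) : AddSubmonoid (GLgroup n p) :=
  AddSubmonoid.closure ({GLc n p} ∪ Set.range (GLx n p))

/-- The partial order relation on `𝕃`: `x⃗ ≤ y⃗` iff `y⃗ − x⃗ ∈ 𝕃_+`. -/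
def GLle (n : ℕ) (p : Fin n → ℕ) (x y : GLgroup n p) : Prop :=
  y - x ∈ GLplus n p

/-- The dualizing element `ω⃗ = (n − d − 1) c⃗ − Σ_i x⃗_i` of `𝕃`. -/
def GLomega (d n : ℕ) (p : Fin n → ℕ) : GLgroup n p :=
  ((n : ℤ) - d - 1) • GLc n p - ∑ i, GLx n p i

/-!
Clearing denominators in `δ` gives the degree map `deg : 𝕃 → ℤ`, and with `P = p_1 ⋯ p_n` the
relations `p_i x⃗_i = c⃗` give `P • x = deg x • c⃗` for every `x ∈ 𝕃`. If `deg x ≠ 0`, then `x` and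
`c⃗` have infinite order, so the index of the subgroup generated by this element is
`P * [𝕃 : ℤx]` on the one hand and `|deg x| * [𝕃 : ℤc⃗]` on the other. Reducing the `i`-th
coordinate modulo `p_i` identifies `𝕃/ℤc⃗` with `∏ ℤ/p_i`, whence `[𝕃 : ℤc⃗] = P` and
`[𝕃 : ℤx] = |deg x|`.
-/

theorem index_zmultiples_zsmul {G : Type*} [AddGroup G] {g : G} (hg : ¬IsOfFinAddOrder g)
    (m : ℤ) :
    (AddSubgroup.zmultiples (m • g)).index = m.natAbs * (AddSubgroup.zmultiples g).index := by
  have hle : AddSubgroup.zmultiples (m • g) ≤ AddSubgroup.zmultiples g :=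
    AddSubgroup.zmultiples_le_of_mem (AddSubgroup.zsmul_mem_zmultiples g m)
  have hinj : Function.Injective (zmultiplesHom G g) :=
    injective_zsmul_iff_not_isOfFinAddOrder.mpr hg
  have hmap : (AddSubgroup.zmultiples m).map (zmultiplesHom G g) =
      AddSubgroup.zmultiples (m • g) := AddMonoidHom.map_zmultiples _ _
  have hrange : (⊤ : AddSubgroup ℤ).map (zmultiplesHom G g) = AddSubgroup.zmultiples g :=
    (AddMonoidHom.range_eq_map _).symm
  rw [← AddSubgroup.relIndex_mul_index hle, ← hmap, ← hrange,
    AddSubgroup.relIndex_map_map_of_injective _ _ hinj, AddSubgroup.relIndex_top_right,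
    Int.index_zmultiples]

namespace GLgroup

variable {n : ℕ} {p : Fin n → ℕ}

theorem nsmul_GLx (i : Fin n) : p i • GLx n p i = GLc n p := by
  have hrel : ((Pi.single i (p i : ℤ), -1) : (Fin n → ℤ) × ℤ) ∈ GLrels n p :=
    AddSubgroup.subset_closure ⟨i, rfl⟩
  refine (QuotientAddGroup.eq_iff_sub_mem (N := GLrels n p)
    (x := p i • ((Pi.single i 1, 0) : (Fin n → ℤ) × ℤ)) (y := (0, 1))).mpr ?_
  convert hrel using 1
  simp [← Pi.single_smul]

theorem mk_eq_sum (a : Fin n → ℤ) (k : ℤ) :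
    ((a, k) : (Fin n → ℤ) × ℤ) = (∑ i, a i • GLx n p i + k • GLc n p : GLgroup n p) := by
  have hsplit : ((a, k) : (Fin n → ℤ) × ℤ) =
      ∑ i, a i • (Pi.single i 1, 0) + k • (0, 1) := by
    ext <;> simp [Prod.fst_sum, Prod.snd_sum, Finset.sum_apply, Pi.single_apply]
  rw [hsplit, QuotientAddGroup.mk_add, QuotientAddGroup.mk_sum]
  rfl

theorem exists_eq_sum (x : GLgroup n p) :
    ∃ (a : Fin n → ℤ) (k : ℤ), x = ∑ i, a i • GLx n p i + k • GLc n p := by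
  obtain ⟨⟨a, k⟩, rfl⟩ := QuotientAddGroup.mk_surjective x
  exact ⟨a, k, mk_eq_sum a k⟩

theorem hom_ext {A : Type*} [AddCommGroup A] {f g : GLgroup n p →+ A}
    (hx : ∀ i, f (GLx n p i) = g (GLx n p i)) (hc : f (GLc n p) = g (GLc n p)) : f = g := by
  refine DFunLike.ext f g fun x ↦ ?_
  obtain ⟨a, k, rfl⟩ := exists_eq_sum x
  simp only [map_add, map_sum, map_zsmul, hx, hc]

section Lift

variable {A : Type*} [AddCommGroup A] (x : Fin n → A) (c : A) (h : ∀ i, p i • x i = c)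

/-- The universal property of `𝕃`: the homomorphism sending `x⃗_i` to `x i` and `c⃗` to `c`, for
elements that satisfy the defining relations. -/
def lift : GLgroup n p →+ A :=
  QuotientAddGroup.lift (GLrels n p)
    ((Fintype.linearCombination ℤ x).toAddMonoidHom.coprod (zmultiplesHom A c)) <| by
      rw [GLrels, AddSubgroup.closure_le]
      rintro _ ⟨i, rfl⟩
      simp [← h i]

@[simp]
theorem lift_GLx (i : Fin n) : lift x c h (GLx n p i) = x i := by
  simp [lift, GLx]

@[simp]
theorem lift_GLc : lift x c h (GLc n p) = c := by
  simp [lift, GLc]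

end Lift

/-- The degree map `𝕃 → ℤ`, namely `p_1 ⋯ p_n` times `δ`, written without division. -/
def degree : GLgroup n p →+ ℤ :=
  lift (fun i ↦ ∏ j ∈ Finset.univ.erase i, (p j : ℤ)) (∏ i, (p i : ℤ)) fun i ↦ by
    rw [nsmul_eq_mul, Finset.mul_prod_erase _ (fun j ↦ (p j : ℤ)) (Finset.mem_univ i)]

theorem degree_GLx (i : Fin n) :
    degree (GLx n p i) = ∏ j ∈ Finset.univ.erase i, (p j : ℤ) :=
  lift_GLx _ _ _ i

theorem degree_GLc : degree (GLc n p) = ∏ i, (p i : ℤ) :=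
  lift_GLc _ _ _

theorem degree_GLomega (d : ℕ) :
    degree (GLomega d n p) = ((n : ℤ) - d - 1) * ∏ i, (p i : ℤ) -
      ∑ i, ∏ j ∈ Finset.univ.erase i, (p j : ℤ) := by
  simp only [GLomega, map_sub, map_zsmul, map_sum, degree_GLx, degree_GLc, smul_eq_mul]

theorem prod_zsmul_eq_degree_zsmul (x : GLgroup n p) :
    (∏ i, (p i : ℤ)) • x = degree x • GLc n p := by
  have hGLx (i : Fin n) : (∏ j, (p j : ℤ)) • GLx n p i = degree (GLx n p i) • GLc n p := by
    rw [degree_GLx, ← Finset.prod_erase_mul _ _ (Finset.mem_univ i), mul_smul, natCast_zsmul,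
      nsmul_GLx]
  have heq : zsmulAddGroupHom (∏ i, (p i : ℤ)) =
      (zmultiplesHom (GLgroup n p) (GLc n p)).comp degree :=
    hom_ext hGLx (congrArg (· • GLc n p) degree_GLc.symm)
  exact DFunLike.congr_fun heq x

theorem prod_mul_apply_eq_degree {R : Type*} [CommRing R] (δ : GLgroup n p →+ R)
    (hδc : δ (GLc n p) = 1) (x : GLgroup n p) : (∏ i, (p i : R)) * δ x = degree x := by
  simpa [hδc] using congrArg δ (prod_zsmul_eq_degree_zsmul x)

theorem degree_ne_zero (hp : ∀ i, 0 < p i) {R : Type*} [CommRing R] [IsDomain R] [CharZero R]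
    (δ : GLgroup n p →+ R) (hδc : δ (GLc n p) = 1) {x : GLgroup n p} (hx : δ x ≠ 0) :
    degree x ≠ 0 := by
  have hprod : ∏ i, (p i : R) ≠ 0 :=
    Finset.prod_ne_zero_iff.mpr fun i _ ↦ Nat.cast_ne_zero.mpr (hp i).ne'
  exact_mod_cast prod_mul_apply_eq_degree δ hδc x ▸ mul_ne_zero hprod hx

theorem not_isOfFinAddOrder_of_degree_ne_zero {x : GLgroup n p} (hx : degree x ≠ 0) :
    ¬IsOfFinAddOrder x :=
  fun h ↦ hx ((isOfFinAddOrder_iff_eq_zero _).mp (degree.isOfFinAddOrder h))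

/-- The homomorphism `𝕃 → ∏ ℤ/p_i` reducing the coefficient of `x⃗_i` modulo `p_i`; it presents
`∏ ℤ/p_i` as `𝕃/ℤc⃗`. -/
def residue : GLgroup n p →+ ∀ i, ZMod (p i) :=
  lift (fun i ↦ Pi.single i 1) 0 fun i ↦ by
    rw [← Pi.single_smul, nsmul_one, ZMod.natCast_self, Pi.single_zero]

theorem residue_sum (a : Fin n → ℤ) (k : ℤ) :
    residue (∑ i, a i • GLx n p i + k • GLc n p) = fun i ↦ (a i : ZMod (p i)) := by
  simp [residue, ← Pi.single_smul, Finset.univ_sum_single]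

theorem residue_surjective : Function.Surjective (residue (p := p)) := by
  intro r
  choose a ha using fun i ↦ ZMod.intCast_surjective (r i)
  exact ⟨∑ i, a i • GLx n p i + 0 • GLc n p, (residue_sum a 0).trans (funext ha)⟩

theorem ker_residue : (residue (p := p)).ker = AddSubgroup.zmultiples (GLc n p) := by
  refine le_antisymm (fun x hx ↦ ?_) (AddSubgroup.zmultiples_le_of_mem (lift_GLc _ _ _))
  obtain ⟨a, k, rfl⟩ := exists_eq_sum x
  have hdvd (i : Fin n) : (p i : ℤ) ∣ a i := by
    rw [← ZMod.intCast_zmod_eq_zero_iff_dvd]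
    exact congrFun ((residue_sum a k).symm.trans hx) i
  choose b hb using hdvd
  refine add_mem (sum_mem fun i _ ↦ ?_) (AddSubgroup.zsmul_mem_zmultiples _ k)
  rw [hb i, mul_comm, mul_smul, natCast_zsmul, nsmul_GLx]
  exact AddSubgroup.zsmul_mem_zmultiples _ _

theorem index_zmultiples_GLc : (AddSubgroup.zmultiples (GLc n p)).index = ∏ i, p i := by
  rw [← ker_residue, AddSubgroup.index_ker,
    AddMonoidHom.range_eq_top.mpr (residue_surjective (p := p)), AddSubgroup.card_top, Nat.card_pi]
  simp only [Nat.card_zmod]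

theorem index_zmultiples (hp : ∀ i, 0 < p i) {x : GLgroup n p} (hx : degree x ≠ 0) :
    (AddSubgroup.zmultiples x).index = (degree x).natAbs := by
  have hprod : 0 < ∏ i, p i := Finset.prod_pos fun i _ ↦ hp i
  have hc : degree (GLc n p) ≠ 0 := by
    rw [degree_GLc]
    exact_mod_cast hprod.ne'
  refine Nat.eq_of_mul_eq_mul_left hprod ?_
  calc (∏ i, p i) * (AddSubgroup.zmultiples x).index
      = (AddSubgroup.zmultiples ((∏ i, (p i : ℤ)) • x)).index := by
        rw [index_zmultiples_zsmul (not_isOfFinAddOrder_of_degree_ne_zero hx), ← Nat.cast_prod,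
          Int.natAbs_natCast]
    _ = (AddSubgroup.zmultiples (degree x • GLc n p)).index := by rw [prod_zsmul_eq_degree_zsmul]
    _ = (degree x).natAbs * ∏ i, p i := by
        rw [index_zmultiples_zsmul (not_isOfFinAddOrder_of_degree_ne_zero hc),
          index_zmultiples_GLc]
    _ = (∏ i, p i) * (degree x).natAbs := mul_comm _ _

end GLgroup

theorem card_quotient_of_not_CY_general {n : ℕ} {p : Fin n → ℕ} (hp : ∀ i, 0 < p i)
    {x : GLgroup n p} (hx : GLgroup.degree x ≠ 0) :
    Finite (GLgroup n p ⧸ AddSubgroup.zmultiples x) ∧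
      Nat.card (GLgroup n p ⧸ AddSubgroup.zmultiples x) = (GLgroup.degree x).natAbs := by
  have hcard := GLgroup.index_zmultiples hp hx
  exact ⟨Nat.finite_of_card_ne_zero (hcard.trans_ne (Int.natAbs_ne_zero.mpr hx)), hcard⟩

/-- If `δ(ω⃗) ≠ 0` (where `δ : 𝕃 → ℚ` is the group homomorphism with
`δ(x⃗_i) = 1/p_i` and `δ(c⃗) = 1`), then `𝕃/ℤω⃗` is finite of cardinality
`|(n − d − 1)·p_1⋯p_n − Σ_i Π_{j ≠ i} p_j| = |(p_1⋯p_n)·δ(ω⃗)|`. -/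
theorem card_quotient_of_not_CY (d n : ℕ) (hd : 1 ≤ d) (p : Fin n → ℕ)
    (hp : ∀ i, 0 < p i)
    (δ : GLgroup n p →+ ℚ) (hδx : ∀ i, δ (GLx n p i) = 1 / (p i : ℚ))
    (hδc : δ (GLc n p) = 1) (hCY : δ (GLomega d n p) ≠ 0) :
    Finite (GLgroup n p ⧸ AddSubgroup.zmultiples (GLomega d n p)) ∧
      Nat.card (GLgroup n p ⧸ AddSubgroup.zmultiples (GLomega d n p)) =
        (((n : ℤ) - d - 1) * ∏ i, (p i : ℤ) -
          ∑ i, ∏ j ∈ Finset.univ.erase i, (p j : ℤ)).natAbs := by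
  rw [← GLgroup.degree_GLomega]
  exact card_quotient_of_not_CY_general hp (GLgroup.degree_ne_zero hp δ hδc hCY)
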